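/- Let b(n) = ν₂(n) mod 2 denote the period-doubling sequence, and for n ≥ 1 let P(n) denote the palindromic length of the finite word (b(1), b(2), …, b(n)). Then for every positive integer n: P(n) ≤ c(n) and c(n) ≤ 3·P(n), where c(n) is the number of runs in the binary expansion of n. -/

import Mathlib

/-!
Write `b t = ν₂(t) mod 2`, so that `b` vanishes at odd arguments and `b (2 t) = 1 - b t`. A factor of
the sequence occupies a half-open interval `(m, n]`, and it is a palindrome when `b` is invariant there
under `t ↦ m + n + 1 - t` (`PalOn m n`). A factorisation of a prefix into palindromes is thus a chain
`0 = m₀ < m₁ < ⋯ < m_k = n` with `PalOn mᵢ mᵢ₊₁`, and both bounds come from comparing `runs` at the two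
ends of one link. Both comparisons are inductions on binary digits: if `m` and `n` have opposite
parities, then halving them carries `PalOn m n` to `PalOn (m / 2) (n / 2)`, since the even positions of
the interval are interchanged by the reflection and the odd ones all carry the letter `0`; meanwhile
`runs` satisfies `runs (2 a + d) = runs a + [d ≠ a mod 2]`.

* Upper bound (`exists_palOn`): every `n > 0` has some `m < n` with `PalOn m n` and
  `runs n = runs m + 1`. In binary, `n = x 0 1ʲ 0ᵏ` with `j ≥ 1` and `m = x 0 0ʲ 1ᵏ`.
* Lower bound (`PalOn.runs_le`): `PalOn m n` forces `runs n ≤ runs m + 3`. Halve as long as the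
  parities differ; the difference of `runs` does not change while the halves still have opposite
  parities. Once the ends have equal parity the interval has even length, and the only palindromes of
  even length are the empty one and `00` (`PalOn.le_add_two`), so the difference is at most `2` there
  because `runs` is 1-Lipschitz upwards (`runs_succ_le`); the last halving step costs one more.
-/


/-- `runs n` is the number of runs (maximal blocks of equal consecutive digits) in the binary
expansion of `n`: the number of indices `i` at which the `i`-th and `(i+1)`-th binary digits
of `n` differ. -/
def runs (n : ℕ) : ℕ :=
  ((Finset.range (n + 1)).filter fun i => n.testBit i ≠ n.testBit (i + 1)).card

/-- The palindromic length of a finite word `w`: the least `k` such that `w` is the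
concatenation of `k` nonempty palindromes (the empty word has palindromic length `0`). -/
noncomputable def palLen (w : List ℕ) : ℕ :=
  sInf {k : ℕ | ∃ l : List (List ℕ), l.length = k ∧
    (∀ p ∈ l, p ≠ [] ∧ p.Palindrome) ∧ l.flatten = w}

/-- The period-doubling sequence `b(n) = ν₂(n) mod 2`. -/
def pd (n : ℕ) : ℕ := padicValNat 2 n % 2

lemma pd_odd (n : ℕ) : pd (2 * n + 1) = 0 := by
  unfold pd
  rw [padicValNat.eq_zero_of_not_dvd (by omega)]

lemma pd_even (n : ℕ) (hn : 0 < n) : pd (2 * n) = 1 - pd n := by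
  unfold pd
  rw [padicValNat.mul (by norm_num) (by omega), padicValNat.self (by norm_num)]
  omega

lemma pd_lt (n : ℕ) : pd n < 2 := Nat.mod_lt _ (by norm_num)

/-- The range of indices in the definition of `runs` may be enlarged. -/
lemma runs_eq (n N : ℕ) (h : n + 1 ≤ N) :
    runs n = ((Finset.range N).filter fun i => n.testBit i ≠ n.testBit (i + 1)).card := by
  unfold runs
  congr 1
  ext i
  simp only [Finset.mem_filter, Finset.mem_range]
  refine ⟨fun ⟨h1, h2⟩ => ⟨by omega, h2⟩, fun ⟨_, h2⟩ => ⟨?_, h2⟩⟩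
  by_contra hi
  apply h2
  have h3 : n < 2 ^ i := lt_of_lt_of_le Nat.lt_two_pow_self (Nat.pow_le_pow_right (by norm_num) (by omega))
  rw [Nat.testBit_lt_two_pow h3,
    Nat.testBit_lt_two_pow (h3.trans (Nat.pow_lt_pow_right (by norm_num) (by omega)))]

lemma runs_step (n d : ℕ) (hd : d < 2) :
    runs (2 * n + d) = runs n + (if d = n % 2 then 0 else 1) := by
  have h0 : (2 * n + d).testBit 0 = decide (d = 1) := by
    rw [Nat.testBit_zero]; congr 1; apply propext; omega
  have hs (i : ℕ) : (2 * n + d).testBit (i + 1) = n.testBit i := by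
    rw [Nat.testBit_succ]; congr 1; omega
  rw [runs_eq (2 * n + d) (2 * n + d + 1 + 1) (by omega), runs_eq n (2 * n + d + 1) (by omega),
    Finset.card_filter, Finset.card_filter, Finset.sum_range_succ']
  congr 1
  · simp only [hs]
  · rw [hs, h0, Nat.testBit_zero]
    by_cases h : d = n % 2
    · simp [h]
    · have : d = 1 ↔ ¬ n % 2 = 1 := by omega
      simp [h, this]
      omega

lemma runs_even (n : ℕ) : runs (2 * n) = runs n + n % 2 := by
  have := runs_step n 0 (by norm_num)
  split_ifs at this <;> simp at this <;> omega

lemma runs_odd (n : ℕ) : runs (2 * n + 1) = runs n + (1 - n % 2) := by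
  have := runs_step n 1 (by norm_num)
  split_ifs at this <;> omega

lemma runs_zero : runs 0 = 0 := by decide

lemma runs_succ_le (n : ℕ) : runs (n + 1) ≤ runs n + 1 := by
  induction n using Nat.strong_induction_on with
  | _ n ih =>
    obtain ⟨a, rfl | rfl⟩ : ∃ a, n = 2 * a ∨ n = 2 * a + 1 := ⟨n / 2, by omega⟩
    · rw [runs_even, runs_odd]; omega
    · have h := ih a (by omega)
      rw [show 2 * a + 1 + 1 = 2 * (a + 1) by ring, runs_even, runs_odd]
      omega

/-- The factor of the period-doubling sequence at the positions of `(m, n]` is a palindrome,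
expressed through the reflection `t ↦ m + n + 1 - t` of that interval. -/
def PalOn (m n : ℕ) : Prop := ∀ t, m < t → t ≤ n → pd t = pd (m + n + 1 - t)

/-- The digits `d` and `1 - d` appended to the ends make the two cases of halving an interval whose
ends have opposite parities; palindromicity is unaffected. -/
lemma palOn_double (m n d : ℕ) (hd : d < 2) : PalOn (2 * m + d) (2 * n + (1 - d)) ↔ PalOn m n := by
  constructor
  · intro h t h1 h2
    have := h (2 * t) (by omega) (by omega)
    rw [show 2 * m + d + (2 * n + (1 - d)) + 1 - 2 * t = 2 * (m + n + 1 - t) by omega,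
      pd_even _ (by omega), pd_even _ (by omega)] at this
    have := pd_lt t
    have := pd_lt (m + n + 1 - t)
    omega
  · intro h t h1 h2
    obtain ⟨a, rfl | rfl⟩ : ∃ a, t = 2 * a ∨ t = 2 * a + 1 := ⟨t / 2, by omega⟩
    · rw [show 2 * m + d + (2 * n + (1 - d)) + 1 - 2 * a = 2 * (m + n + 1 - a) by omega,
        pd_even _ (by omega), pd_even _ (by omega), h a (by omega) (by omega)]
    · rw [show 2 * m + d + (2 * n + (1 - d)) + 1 - (2 * a + 1) = 2 * (m + n - a) + 1 by omega,
        pd_odd, pd_odd]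

/-- One palindrome at the end of a prefix lowers the number of runs by one. The opposite parities
of `m` and `n` are what makes the halving induction go through. -/
lemma exists_palOn (n : ℕ) (hn : 0 < n) :
    ∃ m < n, (m + n) % 2 = 1 ∧ runs n = runs m + 1 ∧ PalOn m n := by
  induction n using Nat.strong_induction_on with
  | _ n ih =>
    obtain ⟨a, rfl | rfl⟩ : ∃ a, n = 2 * a ∨ n = 2 * a + 1 := ⟨n / 2, by omega⟩
    · obtain ⟨m, h1, h2, h3, h4⟩ := ih a (by omega) (by omega)
      refine ⟨2 * m + 1, by omega, by omega, ?_, (palOn_double m a 1 (by norm_num)).2 h4⟩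
      rw [runs_even, runs_odd]; omega
    · by_cases ha : a % 2 = 0
      · refine ⟨2 * a, by omega, by omega, ?_, ?_⟩
        · rw [runs_even, runs_odd]; omega
        · intro t h1 h2
          congr 1
          omega
      · obtain ⟨m, h1, h2, h3, h4⟩ := ih a (by omega) (by omega)
        refine ⟨2 * m, by omega, by omega, ?_, (palOn_double m a 0 (by norm_num)).2 h4⟩
        rw [runs_even, runs_odd]; omega

/-- A palindromic factor of even length has length at most `2`. -/
lemma PalOn.le_add_two {m n : ℕ} (h : PalOn m n) (hp : m % 2 = n % 2) : n ≤ m + 2 := by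
  by_contra hc
  -- The four central positions are `c - 1, c, c + 1, c + 2`, reflected in pairs. Of each pair one
  -- position is odd, so all four letters are `0`; the two even positions are `2 d` and `2 (d + 1)`,
  -- and one of `d`, `d + 1` is odd, giving the letter `1` after doubling.
  obtain ⟨c, hcm⟩ : ∃ c, m + n = 2 * c := ⟨(m + n) / 2, by omega⟩
  have e1 := h c (by omega) (by omega)
  have e2 := h (c - 1) (by omega) (by omega)
  rw [show m + n + 1 - c = c + 1 by omega] at e1
  rw [show m + n + 1 - (c - 1) = c + 2 by omega] at e2
  have key (d : ℕ) (hd : 0 < d) (h1 : pd (2 * d) = 0) (h2 : pd (2 * (d + 1)) = 0) : False := by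
    rw [pd_even _ (by omega)] at h1 h2
    obtain ⟨a, rfl | rfl⟩ : ∃ a, d = 2 * a ∨ d = 2 * a + 1 := ⟨d / 2, by omega⟩
    · rw [pd_odd] at h2; omega
    · rw [pd_odd] at h1; omega
  obtain ⟨a, rfl | rfl⟩ : ∃ a, c = 2 * a ∨ c = 2 * a + 1 := ⟨c / 2, by omega⟩
  · rw [pd_odd] at e1
    rw [show 2 * a - 1 = 2 * (a - 1) + 1 by omega, pd_odd] at e2
    exact key a (by omega) e1 e2.symm
  · rw [pd_odd] at e1
    rw [show 2 * a + 1 + 2 = 2 * (a + 1) + 1 by ring, pd_odd] at e2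
    exact key a (by omega) e2 e1.symm

lemma PalOn.runs_le_of_parity {m n : ℕ} (h : PalOn m n) (hmn : m ≤ n) (hp : m % 2 = n % 2) :
    runs n ≤ runs m + 2 := by
  have h2 := h.le_add_two hp
  obtain rfl | rfl : n = m ∨ n = m + 2 := by omega
  · omega
  · have := runs_succ_le m
    have := runs_succ_le (m + 1)
    rw [show m + 1 + 1 = m + 2 by ring] at this
    omega

lemma PalOn.runs_le {m n : ℕ} (h : PalOn m n) (hmn : m ≤ n) : runs n ≤ runs m + 3 := by
  induction n using Nat.strong_induction_on generalizing m with
  | _ n ih =>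
    by_cases hp : m % 2 = n % 2
    · have := h.runs_le_of_parity hmn hp
      omega
    obtain ⟨a, ha⟩ : ∃ a, a = m / 2 := ⟨_, rfl⟩
    obtain ⟨c, hc⟩ : ∃ c, c = n / 2 := ⟨_, rfl⟩
    have hac : PalOn a c := by
      rw [← palOn_double a c (m % 2) (by omega)]
      convert h using 1 <;> omega
    have h3 := ih c (by omega) hac (by omega)
    have h2 := hac.runs_le_of_parity (by omega)
    obtain ⟨rfl, rfl⟩ | ⟨rfl, rfl⟩ : (m = 2 * a ∧ n = 2 * c + 1) ∨ (m = 2 * a + 1 ∧ n = 2 * c) := by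
      omega
    all_goals
      rw [runs_even, runs_odd]
      by_cases hq : a % 2 = c % 2
      · have := h2 hq
        omega
      · omega

/-- The factor of length `k` of the period-doubling sequence that starts right after position `m`,
at the positions of `(m, m + k]`. -/
def pdWord (m k : ℕ) : List ℕ := (List.range k).map fun t => pd (m + t + 1)

lemma pdWord_add (m j k : ℕ) : pdWord m (j + k) = pdWord m j ++ pdWord (m + j) k := by
  simp [pdWord, List.range_add, Function.comp_def, add_assoc]

lemma length_pdWord (m k : ℕ) : (pdWord m k).length = k := by simp [pdWord]

lemma palindrome_pdWord (m k : ℕ) : (pdWord m k).Palindrome ↔ PalOn m (m + k) := by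
  rw [List.Palindrome.iff_reverse_eq]
  constructor
  · intro h t h1 h2
    have h3 : (pdWord m k).reverse[t - m - 1]? = (pdWord m k)[t - m - 1]? := by rw [h]
    rw [List.getElem?_reverse (by rw [length_pdWord]; omega), length_pdWord] at h3
    have e1 : k - 1 - (t - m - 1) < k := by omega
    have e2 : t - m - 1 < k := by omega
    simp only [pdWord, List.getElem?_map, List.getElem?_range e1, List.getElem?_range e2,
      Option.map_some, Option.some.injEq] at h3
    rw [show m + (t - m - 1) + 1 = t by omega] at h3
    rw [← h3]
    congr 1
    omega
  · intro h
    apply List.ext_getElem (by simp)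
    intro i h1 h2
    rw [length_pdWord] at h2
    simp only [pdWord, List.getElem_reverse, List.getElem_map, List.getElem_range,
      List.length_map, List.length_range]
    rw [h (m + i + 1) (by omega) (by omega)]
    congr 1
    omega

lemma exists_factorization (n : ℕ) : ∃ l : List (List ℕ), l.length = runs n ∧
    (∀ p ∈ l, p ≠ [] ∧ p.Palindrome) ∧ l.flatten = pdWord 0 n := by
  induction n using Nat.strong_induction_on with
  | _ n ih =>
    rcases Nat.eq_zero_or_pos n with rfl | hn
    · exact ⟨[], by simp [runs_zero], by simp, by simp [pdWord]⟩
    obtain ⟨m, hm, -, hr, hpal⟩ := exists_palOn n hn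
    obtain ⟨l, h1, h2, h3⟩ := ih m hm
    obtain ⟨k, rfl⟩ := Nat.exists_eq_add_of_lt hm
    refine ⟨l ++ [pdWord m (k + 1)], by simp [h1, hr], ?_, ?_⟩
    · intro p hp
      rcases List.mem_append.1 hp with hp | hp
      · exact h2 p hp
      · rw [List.mem_singleton.1 hp]
        refine ⟨fun h => ?_, (palindrome_pdWord m (k + 1)).2 hpal⟩
        have := congrArg List.length h
        simp [length_pdWord] at this
    · have h4 := pdWord_add 0 m (k + 1)
      rw [zero_add] at h4
      rw [List.flatten_append, h3, add_assoc, h4]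
      simp

lemma runs_le_of_factorization (l : List (List ℕ)) (hl : ∀ p ∈ l, p.Palindrome) (m k : ℕ)
    (h : l.flatten = pdWord m k) : runs (m + k) ≤ runs m + 3 * l.length := by
  induction l generalizing m k with
  | nil =>
    have := congrArg List.length h
    simp [length_pdWord] at this
    simp [← this]
  | cons p l ih =>
    rw [List.flatten_cons] at h
    have hlen := congrArg List.length h
    rw [List.length_append, length_pdWord] at hlen
    obtain ⟨j, hj⟩ : ∃ j, j = l.flatten.length := ⟨_, rfl⟩
    obtain rfl : k = p.length + j := by omega
    rw [pdWord_add] at h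
    obtain ⟨h1, h2⟩ := List.append_inj h (length_pdWord _ _).symm
    have hp : PalOn m (m + p.length) := by
      rw [← palindrome_pdWord, ← h1]
      exact hl p (by simp)
    have h3 := hp.runs_le (by omega)
    have h4 := ih (fun q hq => hl q (by simp [hq])) (m + p.length) j h2
    rw [List.length_cons, ← add_assoc]
    omega

/-- The paper's Theorem 2: for `n ≥ 1`, the palindromic length `P n` of the prefix
`(b(1), …, b(n))` of the period-doubling sequence `b(m) = ν₂(m) mod 2` satisfies
`P n ≤ runs n` and `runs n ≤ 3 * P n`. -/
theorem pd_palLen_bounds (n : ℕ) (hn : 0 < n) :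
    palLen ((List.range n).map fun t => padicValNat 2 (t + 1) % 2) ≤ runs n ∧
    runs n ≤ 3 * palLen ((List.range n).map fun t => padicValNat 2 (t + 1) % 2) := by
  have hw : ((List.range n).map fun t => padicValNat 2 (t + 1) % 2) = pdWord 0 n := by
    simp [pdWord, pd]
  rw [hw]
  have hmem := exists_factorization n
  refine ⟨Nat.sInf_le hmem, ?_⟩
  -- The set of admissible lengths is nonempty, so its infimum is attained.
  obtain ⟨l, h1, h2, h3⟩ := Nat.sInf_mem (s := {k : ℕ | ∃ l : List (List ℕ), l.length = k ∧
    (∀ p ∈ l, p ≠ [] ∧ p.Palindrome) ∧ l.flatten = pdWord 0 n}) ⟨_, hmem⟩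
  have h4 := runs_le_of_factorization l (fun p hp => (h2 p hp).2) 0 n h3
  rw [zero_add, runs_zero, zero_add, h1] at h4
  exact h4
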